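/- For all n ≥ 1 and 0 ≤ k ≤ n-1, the complement of the generalized crown graph S_{n-k}^k is word-representable. -/

import Mathlib

/-- Two distinct letters `x` and `y` alternate in the word `w` if, after deleting all
letters other than `x` and `y`, no two consecutive letters of the remaining word are equal. -/
def Alternate {V : Type*} [DecidableEq V] (w : List V) (x y : V) : Prop :=
  (w.filter fun z => decide (z = x ∨ z = y)).Chain' (· ≠ ·)

/-- A word `w` represents the simple graph `G` if every vertex occurs in `w` at least once
and two distinct vertices alternate in `w` exactly when they are adjacent in `G`. -/
def Represents {V : Type*} [DecidableEq V] (G : SimpleGraph V) (w : List V) : Prop :=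
  (∀ v : V, v ∈ w) ∧ ∀ x y : V, x ≠ y → (Alternate w x y ↔ G.Adj x y)

/-- A simple graph is word-representable if some word represents it. -/
def WordRepresentable {V : Type*} [DecidableEq V] (G : SimpleGraph V) : Prop :=
  ∃ w : List V, Represents G w

/-- The generalized crown graph `S_{n-k}^k`: a bipartite graph on vertex set
`{x_1, …, x_n} ∪ {y_1, …, y_n}` (encoded as `Fin n ⊕ Fin n`) in which `x i` and `y j` are
adjacent iff `j` is not congruent to any of `i, i+1, …, i+k` modulo `n`. -/
def genCrownGraph (n k : ℕ) : SimpleGraph (Fin n ⊕ Fin n) :=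
  SimpleGraph.fromRel fun u v =>
    match u, v with
    | Sum.inl i, Sum.inr j => ∀ l : ℕ, l ≤ k → ¬ ((j : ℕ) ≡ (i : ℕ) + l [MOD n])
    | _, _ => False

/-- The letter read at time `t`: the `x`-letters are read at even times, the `y`-letters at odd
times, and the `y`-letters pause once for `n - 1 - k` steps. -/
def crownLetter (n k t : ℕ) : Option (Fin n ⊕ Fin n) :=
  if t % 2 = 0 then
    if h : t / 2 < n then some (Sum.inl ⟨t / 2, h⟩)
    else if h : t / 2 - n < n then some (Sum.inl ⟨t / 2 - n, h⟩)
    else if h : t / 2 - 2 * n < n then some (Sum.inl ⟨t / 2 - 2 * n, h⟩)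
    else none
  else
    if h : t / 2 < n then some (Sum.inr ⟨t / 2, h⟩)
    else if t / 2 < n + (n - 1 - k) then none
    else if h : t / 2 - (n + (n - 1 - k)) < n then
      some (Sum.inr ⟨t / 2 - (n + (n - 1 - k)), h⟩)
    else if h : t / 2 - (2 * n + (n - 1 - k)) < n then
      some (Sum.inr ⟨t / 2 - (2 * n + (n - 1 - k)), h⟩)
    else none

theorem crownLetter_inl (n k t : ℕ) (i : Fin n) :
    crownLetter n k t = some (Sum.inl i) ↔
      t = 2 * i.val ∨ t = 2 * (i.val + n) ∨ t = 2 * (i.val + 2 * n) := by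
  have := i.isLt
  unfold crownLetter
  split_ifs <;> simp [Fin.ext_iff] <;> omega

theorem crownLetter_inr (n k t : ℕ) (j : Fin n) :
    crownLetter n k t = some (Sum.inr j) ↔
      t = 2 * j.val + 1 ∨ t = 2 * (j.val + n + (n - 1 - k)) + 1 ∨
        t = 2 * (j.val + 2 * n + (n - 1 - k)) + 1 := by
  have := j.isLt
  unfold crownLetter
  split_ifs <;> simp [Fin.ext_iff] <;> omega

theorem filter_word_eq {V : Type*} [DecidableEq V] (f : ℕ → Option V) (N : ℕ) (x y : V)
    (M : List ℕ) (W : List V) (hs : M.Pairwise (· < ·))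
    (hM : ∀ t, t ∈ M ↔ t < N ∧ (f t = some x ∨ f t = some y))
    (hW : M.map f = W.map some) :
    ((List.range N).filterMap f).filter (fun z => decide (z = x ∨ z = y)) = W := by
  have h1 : (List.range N).filter (fun t => decide (f t = some x ∨ f t = some y)) = M := by
    refine List.Perm.eq_of_pairwise (le := (· < ·)) ?_ ?_ hs ?_
    · intro a b _ _ h h'
      omega
    · exact List.Pairwise.filter _ List.pairwise_lt_range
    · rw [List.perm_ext_iff_of_nodup]
      · intro t
        simp [hM]
      · exact List.Nodup.filter _ List.nodup_range
      · exact hs.imp (fun h => Nat.ne_of_lt h)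
  have h2 : M.filterMap f = W := by
    have h3 : (M.map f).filterMap id = M.filterMap f := by simp [List.filterMap_map]
    rw [← h3, hW]
    simp [List.filterMap_map]
  rw [← h2, ← h1, List.filterMap_filter, List.filter_filterMap]
  congr 1
  funext t
  cases h : f t <;> simp [Option.filter]

/-- The word representing the complement. -/
def crownWord (n k : ℕ) : List (Fin n ⊕ Fin n) :=
  (List.range (8 * n)).filterMap (crownLetter n k)

theorem Alternate_comm {V : Type*} [DecidableEq V] (w : List V) (x y : V) :
    Alternate w x y ↔ Alternate w y x := by
  unfold Alternate
  simp only [or_comm]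

theorem alt_of_eq {V : Type*} [DecidableEq V] {w W : List V} {x y : V}
    (h : w.filter (fun z => decide (z = x ∨ z = y)) = W) :
    Alternate w x y ↔ W.IsChain (· ≠ ·) := by
  unfold Alternate
  rw [h]
  exact Iff.rfl

theorem alt_ll (n k : ℕ) (i j : Fin n) (h : i.val < j.val) :
    Alternate (crownWord n k) (Sum.inl i) (Sum.inl j) := by
  have hj := j.isLt
  have hne : i ≠ j := by intro e; simp [e] at h
  rw [crownWord, alt_of_eq (filter_word_eq (crownLetter n k) (8 * n) _ _
    [2 * i.val, 2 * j.val, 2 * (i.val + n), 2 * (j.val + n),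
      2 * (i.val + 2 * n), 2 * (j.val + 2 * n)]
    [Sum.inl i, Sum.inl j, Sum.inl i, Sum.inl j, Sum.inl i, Sum.inl j] ?_ ?_ ?_)]
  · simp [hne, hne.symm]
  · simp; omega
  · intro t
    simp only [crownLetter_inl, List.mem_cons, List.not_mem_nil, or_false]
    omega
  · simp [crownLetter_inl]

theorem alt_rr (n k : ℕ) (i j : Fin n) (h : i.val < j.val) :
    Alternate (crownWord n k) (Sum.inr i) (Sum.inr j) := by
  have hj := j.isLt
  have hne : i ≠ j := by intro e; simp [e] at h
  rw [crownWord, alt_of_eq (filter_word_eq (crownLetter n k) (8 * n) _ _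
    [2 * i.val + 1, 2 * j.val + 1,
      2 * (i.val + n + (n - 1 - k)) + 1, 2 * (j.val + n + (n - 1 - k)) + 1,
      2 * (i.val + 2 * n + (n - 1 - k)) + 1, 2 * (j.val + 2 * n + (n - 1 - k)) + 1]
    [Sum.inr i, Sum.inr j, Sum.inr i, Sum.inr j, Sum.inr i, Sum.inr j] ?_ ?_ ?_)]
  · simp [hne, hne.symm]
  · simp; omega
  · intro t
    simp only [crownLetter_inr, List.mem_cons, List.not_mem_nil, or_false]
    omega
  · simp [crownLetter_inr]

theorem alt_lr (n k : ℕ) (hk : k ≤ n - 1) (i j : Fin n) :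
    Alternate (crownWord n k) (Sum.inl i) (Sum.inr j) ↔
      (i.val ≤ j.val ∧ j.val ≤ i.val + k) ∨ (j.val + n ≤ i.val + k) := by
  have hj := j.isLt
  have hi := i.isLt
  by_cases h1 : i.val ≤ j.val
  · by_cases h2 : j.val ≤ i.val + k
    · rw [crownWord, alt_of_eq (filter_word_eq (crownLetter n k) (8 * n) _ _
        [2 * i.val, 2 * j.val + 1, 2 * (i.val + n), 2 * (j.val + n + (n - 1 - k)) + 1,
          2 * (i.val + 2 * n), 2 * (j.val + 2 * n + (n - 1 - k)) + 1]
        [Sum.inl i, Sum.inr j, Sum.inl i, Sum.inr j, Sum.inl i, Sum.inr j] ?_ ?_ ?_)]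
      · simp [h1, h2]
      · simp; omega
      · intro t
        simp only [crownLetter_inl, crownLetter_inr, List.mem_cons, List.not_mem_nil, or_false]
        omega
      · simp [crownLetter_inl, crownLetter_inr]
    · rw [crownWord, alt_of_eq (filter_word_eq (crownLetter n k) (8 * n) _ _
        [2 * i.val, 2 * j.val + 1, 2 * (i.val + n), 2 * (i.val + 2 * n),
          2 * (j.val + n + (n - 1 - k)) + 1, 2 * (j.val + 2 * n + (n - 1 - k)) + 1]
        [Sum.inl i, Sum.inr j, Sum.inl i, Sum.inl i, Sum.inr j, Sum.inr j] ?_ ?_ ?_)]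
      · simp; omega
      · simp; omega
      · intro t
        simp only [crownLetter_inl, crownLetter_inr, List.mem_cons, List.not_mem_nil, or_false]
        omega
      · simp [crownLetter_inl, crownLetter_inr]
  · by_cases h2 : j.val + n ≤ i.val + k
    · rw [crownWord, alt_of_eq (filter_word_eq (crownLetter n k) (8 * n) _ _
        [2 * j.val + 1, 2 * i.val, 2 * (j.val + n + (n - 1 - k)) + 1, 2 * (i.val + n),
          2 * (j.val + 2 * n + (n - 1 - k)) + 1, 2 * (i.val + 2 * n)]
        [Sum.inr j, Sum.inl i, Sum.inr j, Sum.inl i, Sum.inr j, Sum.inl i] ?_ ?_ ?_)]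
      · simp [h2]
      · simp; omega
      · intro t
        simp only [crownLetter_inl, crownLetter_inr, List.mem_cons, List.not_mem_nil, or_false]
        omega
      · simp [crownLetter_inl, crownLetter_inr]
    · rw [crownWord, alt_of_eq (filter_word_eq (crownLetter n k) (8 * n) _ _
        [2 * j.val + 1, 2 * i.val, 2 * (i.val + n), 2 * (j.val + n + (n - 1 - k)) + 1,
          2 * (i.val + 2 * n), 2 * (j.val + 2 * n + (n - 1 - k)) + 1]
        [Sum.inr j, Sum.inl i, Sum.inl i, Sum.inr j, Sum.inl i, Sum.inr j] ?_ ?_ ?_)]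
      · simp; omega
      · simp; omega
      · intro t
        simp only [crownLetter_inl, crownLetter_inr, List.mem_cons, List.not_mem_nil, or_false]
        omega
      · simp [crownLetter_inl, crownLetter_inr]

theorem modEq_window (n k : ℕ) (hk : k ≤ n - 1) (i j : Fin n) :
    (∃ l : ℕ, l ≤ k ∧ (j : ℕ) ≡ (i : ℕ) + l [MOD n]) ↔
      (i.val ≤ j.val ∧ j.val ≤ i.val + k) ∨ (j.val + n ≤ i.val + k) := by
  have hj := j.isLt
  have hi := i.isLt
  constructor
  · rintro ⟨l, hl, h⟩
    unfold Nat.ModEq at h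
    rw [Nat.mod_eq_of_lt hj] at h
    by_cases h1 : i.val + l < n
    · rw [Nat.mod_eq_of_lt h1] at h
      omega
    · rw [Nat.mod_eq_sub_mod (by omega), Nat.mod_eq_of_lt (by omega)] at h
      omega
  · rintro (⟨h1, h2⟩ | h)
    · refine ⟨j.val - i.val, by omega, ?_⟩
      rw [Nat.add_sub_cancel' h1]
    · refine ⟨j.val + n - i.val, by omega, ?_⟩
      rw [Nat.add_sub_cancel' (by omega)]
      simp [Nat.ModEq]

/-- For all `n ≥ 1` and `0 ≤ k ≤ n-1`, the complement of the generalized crown graph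
`S_{n-k}^k` is word-representable. -/
theorem complement_genCrownGraph_wordRepresentable :
    ∀ n k : ℕ, 1 ≤ n → k ≤ n - 1 → WordRepresentable (genCrownGraph n k)ᶜ := by
  intro n k hn hk
  have hlr : ∀ i j : Fin n, Alternate (crownWord n k) (Sum.inl i) (Sum.inr j) ↔
      (genCrownGraph n k)ᶜ.Adj (Sum.inl i) (Sum.inr j) := by
    intro i j
    rw [alt_lr n k hk, ← modEq_window n k hk]
    simp [genCrownGraph]
  refine ⟨crownWord n k, ?_, ?_⟩
  · rintro (i | j)
    · rw [crownWord, List.mem_filterMap]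
      have := i.isLt
      exact ⟨2 * i.val, by simp; omega, by simp [crownLetter_inl]⟩
    · rw [crownWord, List.mem_filterMap]
      have := j.isLt
      exact ⟨2 * j.val + 1, by simp; omega, by simp [crownLetter_inr]⟩
  · rintro (i | i) (j | j) hne
    · have h1 : (genCrownGraph n k)ᶜ.Adj (Sum.inl i) (Sum.inl j) := by
        simpa [genCrownGraph] using hne
      have h2 : i.val ≠ j.val := fun e => hne (by rw [Fin.ext e])
      refine iff_of_true ?_ h1
      rcases Nat.lt_or_gt_of_ne h2 with h | h
      · exact alt_ll n k i j h
      · exact (Alternate_comm _ _ _).1 (alt_ll n k j i h)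
    · exact hlr i j
    · rw [Alternate_comm, SimpleGraph.adj_comm]
      exact hlr j i
    · have h1 : (genCrownGraph n k)ᶜ.Adj (Sum.inr i) (Sum.inr j) := by
        simpa [genCrownGraph] using hne
      have h2 : i.val ≠ j.val := fun e => hne (by rw [Fin.ext e])
      refine iff_of_true ?_ h1
      rcases Nat.lt_or_gt_of_ne h2 with h | h
      · exact alt_rr n k i j h
      · exact (Alternate_comm _ _ _).1 (alt_rr n k j i h)
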